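/- Let C ⊆ F_q^n be a linear code and f harmonic of degree d. Then Z_{C^⊥, f}^{[m]}(x, y) = (−1)^d · (q^{md} / |C|^m) · Z_{C, f}^{[m]}(x + (q^m − 1)y, x − y), where Z_{C,f}^{[m]}(x,y) = ∑_{X ⊆ E, d ≤ |X| ≤ n−d} f̃(X) A_C^{[m]}(X) x^{|E−X|−d} y^{|X|−d} (MacWilliams-type identity for harmonic m-tuple weight enumerators). -/

import Mathlib

open Finset

variable {ι F : Type*} [Fintype ι] [DecidableEq ι] [Field F] [Fintype F] [DecidableEq F]

/-- `f` is harmonic of degree `d`. -/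
def IsHarmonic (d : ℕ) (f : Finset ι → ℝ) : Prop :=
  ∀ Y : Finset ι, Y.card + 1 = d →
    ∑ Z ∈ Finset.univ.filter (fun Z : Finset ι => Z.card = d ∧ Y ⊆ Z), f Z = 0

/-- The extension `f̃(X) = ∑_{Z ⊆ X, |Z| = d} f(Z)`. -/
def tilde (d : ℕ) (f : Finset ι → ℝ) (X : Finset ι) : ℝ :=
  ∑ Z ∈ X.powerset.filter (fun Z : Finset ι => Z.card = d), f Z

/-- Projection of `F^ι` onto the coordinates in `X`. -/
def proj (F : Type*) [Field F] (X : Finset ι) : (ι → F) →ₗ[F] ({i // i ∈ X} → F) :=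
  LinearMap.funLeft F F (fun i => i.1)

/-- The support of a vector. -/
def supp (v : ι → F) : Finset ι := Finset.univ.filter (fun i => v i ≠ 0)

/-- `A_C^{[m]}(X)`: the number of `m`-tuples of codewords whose supports union to `X`. -/
noncomputable def Acount (C : Submodule F (ι → F)) (m : ℕ) (X : Finset ι) : ℕ :=
  Nat.card {u : Fin m → C // (Finset.univ.biUnion fun j => supp ((u j : ι → F))) = X}

/-- `Z_{C,f}^{[m]}(x,y) = ∑_{X, d ≤ |X| ≤ n-d} f̃(X) A_C^{[m]}(X) x^{|E-X|-d} y^{|X|-d}`. -/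
noncomputable def Zcode (C : Submodule F (ι → F)) (m d : ℕ) (f : Finset ι → ℝ)
    (x y : ℝ) : ℝ :=
  ∑ X ∈ Finset.univ.filter
      (fun X : Finset ι => d ≤ X.card ∧ X.card ≤ Fintype.card ι - d),
    tilde d f X * (Acount C m X : ℝ) * x ^ (Xᶜ.card - d) * y ^ (X.card - d)

/-- The dual code of `C` with respect to the standard inner product. -/
def dualCode (C : Submodule F (ι → F)) : Submodule F (ι → F) where
  carrier := {v | ∀ u ∈ C, ∑ i, u i * v i = 0}
  zero_mem' := by intro u hu; simp
  add_mem' := by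
    intro a b ha hb u hu
    simp only [Set.mem_setOf_eq] at ha hb
    simp only [Pi.add_apply, mul_add, Finset.sum_add_distrib, ha u hu, hb u hu, add_zero]
  smul_mem' := by
    intro c v hv u hu
    simp only [Set.mem_setOf_eq] at hv
    simp only [Pi.smul_apply, smul_eq_mul, mul_left_comm, ← Finset.mul_sum, hv u hu, mul_zero]

/-!
Write `C(T)` for the subcode of the codewords of `C` supported in `T`. Harmonicity gives
`f̃(Xᶜ) = (-1)^d f̃(X)` by inclusion-exclusion, since the sum of `f` over the `d`-sets containing a
given smaller set vanishes. Passing to complements, this turns the binomial identity for the sum of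
`f̃` over subsets, which holds for every `f`, into one for supersets:
`∑_{T ⊇ X} f̃(T) a^{|Tᶜ|-d} y^{|T|-d} = f̃(X) (a + y)^{|Xᶜ|-d} y^{|X|-d}`.
As `∑_{X ⊆ T} A_C^{[m]}(X) = |C(T)|^m`, weighting by `A_C^{[m]}(X)` and summing over `X` yields
`Z_{C,f}^{[m]}(a + y, y) = ∑_T f̃(T) |C(T)|^m a^{|Tᶜ|-d} y^{|T|-d}`.
By linear duality `|C^⊥(T)| |C| = q^{|T|} |C(Tᶜ)|`, so replacing `C` by `C^⊥` and `T` by `Tᶜ` in the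
last formula interchanges the roles of `a` and `q^m y`; finally put `a = x - y`.
-/

section Powerset

variable {α M : Type*} [DecidableEq α] [AddCommMonoid M]

theorem sum_Icc_apply_card {s t : Finset α} (hst : s ⊆ t) (w : ℕ → M) :
    ∑ u ∈ Icc s t, w #u = ∑ k ∈ range (#t - #s + 1), (#t - #s).choose k • w (#s + k) := by
  calc ∑ u ∈ Icc s t, w #u = ∑ r ∈ (t \ s).powerset, w (#s + #r) := by
        refine sum_nbij' (· \ s) (s ∪ ·) ?_ ?_ ?_ ?_ ?_ <;>
          simp only [mem_Icc, mem_powerset]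
        · exact fun u hu => sdiff_subset_sdiff hu.2 subset_rfl
        · exact fun r hr => ⟨subset_union_left, union_subset hst (hr.trans sdiff_subset)⟩
        · exact fun u hu => union_sdiff_of_subset hu.1
        · exact fun r hr => union_sdiff_cancel_left (disjoint_sdiff.mono_right hr)
        · intro u hu
          rw [card_sdiff_of_subset hu.1, Nat.add_sub_cancel' (card_le_card hu.1)]
    _ = _ := by
        rw [sum_powerset_apply_card (fun k => w (#s + k)), card_sdiff_of_subset hst]

theorem sum_compl_sum_insert_subset [Fintype α] (d : ℕ) (f : Finset α → M) (W : Finset α) :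
    ∑ i ∈ Wᶜ, ∑ Z : Finset α with #Z = d ∧ insert i W ⊆ Z, f Z
      = (d - #W) • ∑ Z : Finset α with #Z = d ∧ W ⊆ Z, f Z := by
  rw [sum_comm' (t' := {Z | #Z = d ∧ W ⊆ Z}) (s' := fun Z => Z \ W) (by
    simp only [mem_filter, mem_univ, mem_compl, mem_sdiff, insert_subset_iff]; tauto), smul_sum]
  refine sum_congr rfl fun Z hZ => ?_
  obtain ⟨rfl, hWZ⟩ := (mem_filter.1 hZ).2
  rw [sum_const, card_sdiff_of_subset hWZ]

end Powerset

section Tilde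

variable {d : ℕ} {f : Finset ι → ℝ} {X : Finset ι}

omit [Fintype ι] [DecidableEq ι] in
theorem sum_powerset_tilde_mul_apply_card (d : ℕ) (f : Finset ι → ℝ) (Y : Finset ι) (w : ℕ → ℝ) :
    ∑ S ∈ Y.powerset, tilde d f S * w #S
      = tilde d f Y * ∑ k ∈ range (#Y - d + 1), (#Y - d).choose k * w (d + k) := by
  classical
  simp only [tilde, sum_mul]
  rw [sum_comm' (t' := {Z ∈ Y.powerset | #Z = d}) (s' := fun Z => Icc Z Y)
    (by simp only [mem_filter, mem_powerset, mem_Icc]; grind)]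
  refine sum_congr rfl fun Z hZ => ?_
  obtain ⟨hZY, rfl⟩ := mem_filter.1 hZ
  rw [← mul_sum, sum_Icc_apply_card (mem_powerset.1 hZY)]
  simp only [nsmul_eq_mul]

omit [Fintype ι] [DecidableEq ι] in
theorem tilde_eq_zero_of_card_lt (f : Finset ι → ℝ) (hX : #X < d) : tilde d f X = 0 := by
  rw [tilde, ← powersetCard_eq_filter, powersetCard_eq_empty.2 hX, sum_empty]

theorem IsHarmonic.sum_superset_eq_zero (hf : IsHarmonic d f) {W : Finset ι} (hW : #W < d) :
    ∑ Z : Finset ι with #Z = d ∧ W ⊆ Z, f Z = 0 := by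
  induction hk : d - #W generalizing W with
  | zero => omega
  | succ k ih =>
    obtain hW' | hW' : #W + 1 = d ∨ #W + 1 < d := by omega
    · exact hf W hW'
    · have sum_insert_eq_zero : ∀ i ∈ Wᶜ,
          ∑ Z : Finset ι with #Z = d ∧ insert i W ⊆ Z, f Z = 0 := by
        intro i hi
        have hcard := card_insert_of_notMem (mem_compl.1 hi)
        exact ih (by omega) (by omega)
      have := sum_compl_sum_insert_subset d f W
      rw [sum_eq_zero sum_insert_eq_zero, eq_comm, smul_eq_zero] at this
      exact this.resolve_left (by omega)

theorem tilde_compl_eq_sum_powerset (d : ℕ) (f : Finset ι → ℝ) (X : Finset ι) :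
    tilde d f Xᶜ
      = ∑ W ∈ X.powerset, (-1) ^ #W * ∑ Z : Finset ι with #Z = d ∧ W ⊆ Z, f Z := by
  simp only [mul_sum]
  rw [sum_comm' (t' := {Z | #Z = d}) (s' := fun Z => (X ∩ Z).powerset) (by
    simp only [mem_filter, mem_univ, mem_powerset, subset_inter_iff]; tauto)]
  have alternating_sum (Z : Finset ι) :
      ∑ W ∈ (X ∩ Z).powerset, (-1 : ℝ) ^ #W = if Z ⊆ Xᶜ then 1 else 0 := by
    have := congrArg (Int.cast : ℤ → ℝ) (sum_powerset_neg_one_pow_card (x := X ∩ Z))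
    push_cast at this
    simp only [this, ← disjoint_iff_inter_eq_empty, subset_compl_iff_disjoint_left]
  simp only [← sum_mul, alternating_sum, ite_mul, one_mul, zero_mul, ← sum_filter, filter_filter]
  exact sum_congr (by ext Z; simp [and_comm]) fun _ _ => rfl

theorem IsHarmonic.tilde_compl (hf : IsHarmonic d f) (X : Finset ι) :
    tilde d f Xᶜ = (-1) ^ d * tilde d f X := by
  rw [tilde_compl_eq_sum_powerset, tilde, mul_sum, sum_filter]
  refine sum_congr rfl fun W _ => ?_
  obtain hW | rfl | hW := lt_trichotomy #W d
  · rw [hf.sum_superset_eq_zero hW, if_neg hW.ne, mul_zero]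
  · have superset_eq_singleton : univ.filter (fun Z => #Z = #W ∧ W ⊆ Z) = {W} := by
      ext Z
      simp only [mem_filter, mem_univ, true_and, mem_singleton]
      exact ⟨fun h => (eq_of_subset_of_card_le h.2 h.1.le).symm, by rintro rfl; simp⟩
    rw [superset_eq_singleton, sum_singleton, if_pos rfl]
  · have superset_eq_empty : univ.filter (fun Z => #Z = d ∧ W ⊆ Z) = ∅ := by
      refine filter_eq_empty_iff.2 fun Z _ h => ?_
      exact hW.not_ge (h.1 ▸ card_le_card h.2)
    rw [superset_eq_empty, sum_empty, if_neg hW.ne', mul_zero]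

theorem IsHarmonic.tilde_eq_zero_of_card_compl_lt (hf : IsHarmonic d f) (hX : #Xᶜ < d) :
    tilde d f X = 0 := by
  rw [← compl_compl X, hf.tilde_compl, tilde_eq_zero_of_card_lt f hX, mul_zero]

theorem IsHarmonic.sum_superset_tilde_mul (hf : IsHarmonic d f) (X : Finset ι) (a y : ℝ) :
    ∑ T : Finset ι with X ⊆ T, tilde d f T * (a ^ (#Tᶜ - d) * y ^ (#T - d))
      = tilde d f X * ((a + y) ^ (#Xᶜ - d) * y ^ (#X - d)) := by
  let w (k : ℕ) : ℝ := a ^ (k - d) * y ^ (Fintype.card ι - k - d)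
  have sum_eq_sum_compl : ∑ T : Finset ι with X ⊆ T,
      tilde d f T * (a ^ (#Tᶜ - d) * y ^ (#T - d))
      = (-1) ^ d * ∑ S ∈ Xᶜ.powerset, tilde d f S * w #S := by
    rw [mul_sum]
    refine sum_bij' (fun T _ => Tᶜ) (fun S _ => Sᶜ) ?_ ?_ ?_ ?_ ?_
    · simp
    · simp [subset_compl_comm]
    · simp
    · simp
    · intro T _
      have hcard : Fintype.card ι - #Tᶜ = #T := by rw [← card_compl, compl_compl]
      simp only [w, hcard]
      rw [← mul_assoc ((-1) ^ d), ← hf.tilde_compl, compl_compl]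
  rw [sum_eq_sum_compl, sum_powerset_tilde_mul_apply_card, ← mul_assoc, ← hf.tilde_compl,
    compl_compl]
  obtain hX | hX := lt_or_ge #X d
  · simp only [tilde_eq_zero_of_card_lt f hX, zero_mul]
  obtain hX' | hX' := lt_or_ge #Xᶜ d
  · simp only [hf.tilde_eq_zero_of_card_compl_lt hX', zero_mul]
  rw [add_pow, sum_mul]
  congr 1
  refine sum_congr rfl fun k hk => ?_
  have hcard := card_add_card_compl X
  have hk := mem_range.1 hk
  have y_exponent : Fintype.card ι - (d + k) - d = #Xᶜ - d - k + (#X - d) := by omega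
  simp only [w, y_exponent, add_tsub_cancel_left, pow_add]
  ring

end Tilde

section Code

/-- The subcode `C(T)` of the codewords of `C` supported in `T`; its `m`-tuples are those tuples in
`C^m` whose joint support lies in `T`. -/
noncomputable def subcodeOn (C : Submodule F (ι → F)) (T : Finset ι) : Submodule F (ι → F) :=
  C ⊓ Pi.spanSubset F (T : Set ι)

omit [Fintype F] [DecidableEq ι] in
theorem supp_subset_iff_mem_spanSubset {v : ι → F} {T : Finset ι} :
    supp v ⊆ T ↔ v ∈ Pi.spanSubset F (T : Set ι) := by
  simp only [supp, subset_iff, mem_filter, mem_univ, true_and, Pi.mem_spanSubset_iff, mem_coe]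
  exact forall_congr' fun i => not_imp_comm

omit [Fintype F] in
theorem sum_powerset_Acount [Finite F] (C : Submodule F (ι → F)) (m : ℕ) (T : Finset ι) :
    ∑ X ∈ T.powerset, Acount C m X = Nat.card (subcodeOn C T) ^ m := by
  classical
  have := Fintype.ofFinite F
  have card_filter_subset : #{u : Fin m → C | univ.biUnion (fun j => supp (u j : ι → F)) ⊆ T}
      = Nat.card (subcodeOn C T) ^ m := by
    simp only [biUnion_subset, mem_univ, true_imp_iff, supp_subset_iff_mem_spanSubset]
    rw [← Fintype.card_subtype, ← Nat.card_eq_fintype_card]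
    let tuplesEquiv : {u : Fin m → C // ∀ j, (u j : ι → F) ∈ Pi.spanSubset F (T : Set ι)} ≃
        (Fin m → subcodeOn C T) :=
      Equiv.subtypePiEquivPi.trans <| .piCongrRight fun _ =>
        Equiv.subtypeSubtypeEquivSubtypeInter (· ∈ C) (· ∈ Pi.spanSubset F (T : Set ι))
    rw [Nat.card_congr tuplesEquiv, Nat.card_fun, Nat.card_fin]
  rw [← card_filter_subset]
  simp only [Acount, Nat.card_eq_fintype_card, Fintype.card_subtype]
  simp only [sum_card_fiberwise_eq_card_filter, mem_powerset]

omit [Fintype F] [DecidableEq F] [DecidableEq ι] in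
theorem dualCode_sup (C D : Submodule F (ι → F)) :
    dualCode (C ⊔ D) = dualCode C ⊓ dualCode D := by
  ext v
  refine ⟨fun hv => ⟨fun u hu => hv u (Submodule.mem_sup_left hu),
    fun u hu => hv u (Submodule.mem_sup_right hu)⟩, ?_⟩
  rintro ⟨hvC, hvD⟩ u hu
  obtain ⟨a, ha, b, hb, rfl⟩ := Submodule.mem_sup.1 hu
  simp only [Pi.add_apply, add_mul, sum_add_distrib, hvC a ha, hvD b hb, add_zero]

omit [Fintype F] [DecidableEq F] [DecidableEq ι] in
theorem dualCode_spanSubset_compl (s : Set ι) :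
    dualCode (Pi.spanSubset F sᶜ) = Pi.spanSubset F s := by
  classical
  ext v
  rw [Pi.mem_spanSubset_iff]
  constructor
  · intro hv i hi
    have single_mem : Pi.single i (1 : F) ∈ Pi.spanSubset F sᶜ :=
      Pi.mem_spanSubset_iff.2 fun j hj => Pi.single_eq_of_ne (by rintro rfl; exact hj hi) 1
    simpa [Pi.single_apply] using hv _ single_mem
  · intro hv u hu
    refine sum_eq_zero fun i _ => ?_
    by_cases hi : i ∈ s
    · rw [Pi.mem_spanSubset_iff.1 hu i (by simpa using hi), zero_mul]
    · rw [hv i hi, mul_zero]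

omit [Fintype F] [DecidableEq F] [DecidableEq ι] in
theorem finrank_add_finrank_dualCode (C : Submodule F (ι → F)) :
    Module.finrank F C + Module.finrank F (dualCode C) = Fintype.card ι := by
  let B : LinearMap.BilinForm F (ι → F) := dotProductBilin F F
  have ker_eq_bot : B.ker = ⊥ :=
    LinearMap.ker_eq_bot'.2 fun v hv => dotProduct_eq_zero v (LinearMap.congr_fun hv)
  have := LinearMap.BilinForm.finrank_add_finrank_orthogonal' (B := B) C
  rwa [ker_eq_bot, inf_bot_eq, finrank_bot, Module.finrank_fintype_fun_eq_card] at this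

omit [Fintype F] [DecidableEq F] in
theorem finrank_subcodeOn_dualCode (C : Submodule F (ι → F)) (T : Finset ι) :
    Module.finrank F (subcodeOn (dualCode C) T) + Module.finrank F C
      = #T + Module.finrank F (subcodeOn C Tᶜ) := by
  have subcodeOn_eq :
      subcodeOn (dualCode C) T = dualCode (C ⊔ Pi.spanSubset F (Tᶜ : Finset ι)) := by
    rw [dualCode_sup, coe_compl, dualCode_spanSubset_compl, subcodeOn]
  have finrank_sup_add_finrank_dual :=
    finrank_add_finrank_dualCode (C ⊔ Pi.spanSubset F (Tᶜ : Finset ι))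
  have finrank_sup_add_finrank_inf :=
    Submodule.finrank_sup_add_finrank_inf_eq C (Pi.spanSubset F (Tᶜ : Finset ι))
  rw [Pi.dim_spanSubset, Set.ncard_coe_finset, ← subcodeOn] at finrank_sup_add_finrank_inf
  rw [← subcodeOn_eq] at finrank_sup_add_finrank_dual
  have := card_add_card_compl T
  omega

omit [DecidableEq F] in
theorem card_subcodeOn_dualCode (C : Submodule F (ι → F)) (T : Finset ι) :
    Nat.card (subcodeOn (dualCode C) T) * Nat.card C
      = Fintype.card F ^ #T * Nat.card (subcodeOn C Tᶜ) := by
  rw [Module.natCard_eq_pow_finrank (K := F), Module.natCard_eq_pow_finrank (K := F) (V := C),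
    Module.natCard_eq_pow_finrank (K := F) (V := subcodeOn C Tᶜ), Nat.card_eq_fintype_card,
    ← pow_add, ← pow_add, finrank_subcodeOn_dualCode]

end Code

section Zcode

variable {d : ℕ} {f : Finset ι → ℝ} (C : Submodule F (ι → F)) (m : ℕ)

omit [Fintype F] in
theorem IsHarmonic.Zcode_eq_sum_univ (hf : IsHarmonic d f) (x y : ℝ) :
    Zcode C m d f x y
      = ∑ X : Finset ι, tilde d f X * (Acount C m X : ℝ) * x ^ (#Xᶜ - d) * y ^ (#X - d) := by
  refine sum_subset (subset_univ _) fun X _ hX => ?_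
  have hcard := card_add_card_compl X
  suffices tilde d f X = 0 by simp only [this, zero_mul]
  obtain hX | hX : #X < d ∨ #Xᶜ < d := by
    simp only [mem_filter, mem_univ, true_and] at hX
    omega
  · exact tilde_eq_zero_of_card_lt f hX
  · exact hf.tilde_eq_zero_of_card_compl_lt hX

omit [Fintype F] in
theorem IsHarmonic.Zcode_add_self [Finite F] (hf : IsHarmonic d f) (a y : ℝ) :
    Zcode C m d f (a + y) y = ∑ T : Finset ι,
      tilde d f T * (Nat.card (subcodeOn C T) : ℝ) ^ m * (a ^ (#Tᶜ - d) * y ^ (#T - d)) := by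
  calc Zcode C m d f (a + y) y
      = ∑ X : Finset ι, ∑ T : Finset ι with X ⊆ T,
          Acount C m X * (tilde d f T * (a ^ (#Tᶜ - d) * y ^ (#T - d))) := by
        rw [hf.Zcode_eq_sum_univ]
        refine sum_congr rfl fun X _ => ?_
        rw [← mul_sum, hf.sum_superset_tilde_mul]
        ring
    _ = ∑ T : Finset ι, ∑ X ∈ T.powerset,
          Acount C m X * (tilde d f T * (a ^ (#Tᶜ - d) * y ^ (#T - d))) :=
        sum_comm' (by simp)
    _ = _ := by
        refine sum_congr rfl fun T _ => ?_
        rw [← sum_mul, ← Nat.cast_sum, sum_powerset_Acount, Nat.cast_pow]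
        ring

omit [DecidableEq F] in
theorem IsHarmonic.tilde_mul_card_subcodeOn_dualCode (hf : IsHarmonic d f) (T : Finset ι) :
    tilde d f Tᶜ * (Nat.card (subcodeOn (dualCode C) Tᶜ) : ℝ) ^ m
      = (-1) ^ d * (((Fintype.card F : ℝ) ^ m) ^ #Tᶜ / (Nat.card C : ℝ) ^ m) *
        (tilde d f T * (Nat.card (subcodeOn C T) : ℝ) ^ m) := by
  have card_ne_zero : (Nat.card C : ℝ) ≠ 0 := Nat.cast_ne_zero.2 Nat.card_pos.ne'
  have card_subcode : (Nat.card (subcodeOn (dualCode C) Tᶜ) : ℝ)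
      = (Fintype.card F : ℝ) ^ #Tᶜ * Nat.card (subcodeOn C T) / Nat.card C := by
    rw [eq_div_iff card_ne_zero]
    have := card_subcodeOn_dualCode C Tᶜ
    rw [compl_compl] at this
    exact_mod_cast this
  rw [hf.tilde_compl, card_subcode, div_pow, mul_pow, pow_right_comm]
  ring

theorem IsHarmonic.Zcode_dualCode_add_self (hf : IsHarmonic d f) (a y : ℝ) :
    Zcode (dualCode C) m d f (a + y) y
      = (-1) ^ d * ((Fintype.card F : ℝ) ^ (m * d) / (Nat.card C : ℝ) ^ m) *
        Zcode C m d f ((Fintype.card F : ℝ) ^ m * y + a) a := by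
  rw [hf.Zcode_add_self, hf.Zcode_add_self, mul_sum, ← compl_bijective.sum_comp]
  refine sum_congr rfl fun T _ => ?_
  rw [hf.tilde_mul_card_subcodeOn_dualCode, compl_compl]
  obtain hT | hT := lt_or_ge #Tᶜ d
  · simp only [hf.tilde_eq_zero_of_card_compl_lt hT, mul_zero, zero_mul]
  rw [← pow_mul_pow_sub _ hT, pow_mul, mul_pow]
  ring

end Zcode

/-- MacWilliams-type identity for harmonic `m`-tuple weight enumerators:
`Z_{C^⊥,f}^{[m]}(x,y) = (-1)^d (q^{md} / |C|^m) Z_{C,f}^{[m]}(x + (q^m - 1)y, x - y)`. -/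
theorem stmt_18 (q : ℕ) (hq : Fintype.card F = q) (C : Submodule F (ι → F))
    (m d : ℕ) (f : Finset ι → ℝ) (hf : IsHarmonic d f) (x y : ℝ) :
    Zcode (dualCode C) m d f x y
      = (-1 : ℝ) ^ d * ((q : ℝ) ^ (m * d) / (Nat.card C : ℝ) ^ m) *
          Zcode C m d f (x + ((q : ℝ) ^ m - 1) * y) (x - y) := by
  have h := hf.Zcode_dualCode_add_self C m (x - y) y
  rwa [hq, sub_add_cancel, add_sub_left_comm, ← sub_one_mul] at h
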